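/- arXiv:0708.4173 — 2 statements merged into one kernel-verified Lean document; each statement's English description precedes it below -/
import Mathlib

section
/- Given a recollement (S, T, U) and a Serre functor F on T with quasi-inverse F', the category S has a Serre functor, namely i^! ∘ F ∘ i_*, and i^* ∘ F' ∘ i_* is a quasi-inverse of it. -/
/-!
Setting: `k` a field; `S`, `T`, `U` skeletally small `k`-linear triangulated categories
with finite-dimensional Hom-spaces, `T` with split idempotents.  A recollement
`(S, T, U)` as in [BBD], and (right/left) Serre functors in the sense of
Reiten–Van den Bergh.
-/

open CategoryTheory CategoryTheory.Limits CategoryTheory.Pretriangulated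

universe v₁ v₂ v₃ u₁ u₂ u₃ u₄

/-- A right Serre structure on an endofunctor `F` of a `k`-linear category `C`:
isomorphisms `C(X, Y) ≅ C(Y, F X)^∨`, natural in `X` and `Y`.
A right Serre functor is a functor `F` equipped with such a structure. -/
structure RightSerreStructure (k : Type u₄) [Field k] (C : Type u₁) [Category.{v₁} C]
    [Preadditive C] [CategoryTheory.Linear k C] (F : C ⥤ C) where
  equiv : ∀ X Y : C, (X ⟶ Y) ≃ₗ[k] Module.Dual k (Y ⟶ F.obj X)
  naturality_left : ∀ {X X' Y : C} (f : X' ⟶ X) (φ : X ⟶ Y) (u : Y ⟶ F.obj X'),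
    equiv X' Y (f ≫ φ) u = equiv X Y φ (u ≫ F.map f)
  naturality_right : ∀ {X Y Y' : C} (φ : X ⟶ Y) (g : Y ⟶ Y') (u : Y' ⟶ F.obj X),
    equiv X Y' (φ ≫ g) u = equiv X Y φ (g ≫ u)

/-- A left Serre structure on an endofunctor `F'` of a `k`-linear category `C`:
isomorphisms `C(X, Y) ≅ C(F' Y, X)^∨`, natural in `X` and `Y`.
A left Serre functor is a functor `F'` equipped with such a structure. -/
structure LeftSerreStructure (k : Type u₄) [Field k] (C : Type u₁) [Category.{v₁} C]
    [Preadditive C] [CategoryTheory.Linear k C] (F' : C ⥤ C) where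
  equiv : ∀ X Y : C, (X ⟶ Y) ≃ₗ[k] Module.Dual k (F'.obj Y ⟶ X)
  naturality_left : ∀ {X X' Y : C} (f : X' ⟶ X) (φ : X ⟶ Y) (u : F'.obj Y ⟶ X'),
    equiv X' Y (f ≫ φ) u = equiv X Y φ (u ≫ f)
  naturality_right : ∀ {X Y Y' : C} (φ : X ⟶ Y) (g : Y ⟶ Y') (u : F'.obj Y' ⟶ X),
    equiv X Y' (φ ≫ g) u = equiv X Y φ (F'.map g ≫ u)

/-- A Serre functor: an essentially surjective right Serre functor. -/
structure SerreFunctor (k : Type u₄) [Field k] (C : Type u₁) [Category.{v₁} C]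
    [Preadditive C] [CategoryTheory.Linear k C] where
  F : C ⥤ C
  rightSerre : RightSerreStructure k C F
  essSurj : F.EssSurj

/-- A recollement of triangulated categories `(S, T, U)`:
triangulated functors `i_* = iSt : S ⥤ T`, `i^* = iUp, i^! = iSh : T ⥤ S`,
`j^* = jUp : T ⥤ U`, `j_! = jLo, j_* = jSt : U ⥤ T` with the adjunctions,
vanishing, full faithfulness and distinguished-triangle conditions of [BBD, sec. 1.4]. -/
structure Recollement (S : Type u₁) (T : Type u₂) (U : Type u₃)
    [Category.{v₁} S] [Category.{v₂} T] [Category.{v₃} U]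
    [HasZeroObject S] [HasZeroObject T] [HasZeroObject U]
    [Preadditive S] [Preadditive T] [Preadditive U]
    [HasShift S ℤ] [HasShift T ℤ] [HasShift U ℤ]
    [∀ n : ℤ, (shiftFunctor S n).Additive] [∀ n : ℤ, (shiftFunctor T n).Additive]
    [∀ n : ℤ, (shiftFunctor U n).Additive]
    [Pretriangulated S] [Pretriangulated T] [Pretriangulated U] where
  /-- `i_* : S ⥤ T` -/
  iSt : S ⥤ T
  /-- `i^* : T ⥤ S` -/
  iUp : T ⥤ S
  /-- `i^! : T ⥤ S` -/
  iSh : T ⥤ S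
  /-- `j^* : T ⥤ U` -/
  jUp : T ⥤ U
  /-- `j_! : U ⥤ T` -/
  jLo : U ⥤ T
  /-- `j_* : U ⥤ T` -/
  jSt : U ⥤ T
  [commShift_iSt : iSt.CommShift ℤ]
  [commShift_iUp : iUp.CommShift ℤ]
  [commShift_iSh : iSh.CommShift ℤ]
  [commShift_jUp : jUp.CommShift ℤ]
  [commShift_jLo : jLo.CommShift ℤ]
  [commShift_jSt : jSt.CommShift ℤ]
  [isTriangulated_iSt : iSt.IsTriangulated]
  [isTriangulated_iUp : iUp.IsTriangulated]
  [isTriangulated_iSh : iSh.IsTriangulated]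
  [isTriangulated_jUp : jUp.IsTriangulated]
  [isTriangulated_jLo : jLo.IsTriangulated]
  [isTriangulated_jSt : jSt.IsTriangulated]
  /-- `(i^*, i_*)` is an adjoint pair. -/
  adj₁ : iUp ⊣ iSt
  /-- `(i_*, i^!)` is an adjoint pair. -/
  adj₂ : iSt ⊣ iSh
  /-- `(j_!, j^*)` is an adjoint pair. -/
  adj₃ : jLo ⊣ jUp
  /-- `(j^*, j_*)` is an adjoint pair. -/
  adj₄ : jUp ⊣ jSt
  /-- `j^* ∘ i_* = 0`. -/
  zero_comp : ∀ X : S, IsZero (jUp.obj (iSt.obj X))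
  fullyFaithful_iSt : iSt.FullyFaithful
  fullyFaithful_jLo : jLo.FullyFaithful
  fullyFaithful_jSt : jSt.FullyFaithful
  /-- The distinguished triangle `i_* i^! X ⟶ X ⟶ j_* j^* X ⟶`, whose morphisms into and
  out of `X` are the counit of `(i_*, i^!)` and the unit of `(j^*, j_*)`. -/
  triangle_a : ∀ X : T, ∃ δ : jSt.obj (jUp.obj X) ⟶ (iSt.obj (iSh.obj X))⟦(1 : ℤ)⟧,
    Triangle.mk (adj₂.counit.app X) (adj₄.unit.app X) δ ∈ distTriang T
  /-- The distinguished triangle `j_! j^* X ⟶ X ⟶ i_* i^* X ⟶`, whose morphisms into and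
  out of `X` are the counit of `(j_!, j^*)` and the unit of `(i^*, i_*)`. -/
  triangle_b : ∀ X : T, ∃ δ : iSt.obj (iUp.obj X) ⟶ (jLo.obj (jUp.obj X))⟦(1 : ℤ)⟧,
    Triangle.mk (adj₃.counit.app X) (adj₁.unit.app X) δ ∈ distTriang T

/-!
Write `G = i^! ∘ F ∘ i_*`. The adjunction `i_* ⊣ i^!` and the Serre structure of `T` give
`S(X, Y) ≅ T(i_* X, i_* Y) ≅ T(i_* Y, F i_* X)^∨ ≅ S(Y, G X)^∨`. This is linear for the
`k`-structure on `S` pulled back along `i_*`, which may differ from the given one because `i_*`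
is only additive.

So a Serre structure has to be carried over between two linear structures, over fields `K` and `L`,
on one category. Both factor through the center `R`, and the Serre pairing `B` is `R`-balanced.
Compose the functional `r ↦ B m (r • n)` on `R` with an `L`-linear form on `Hom_K(R, K)` that
vanishes on no nonzero finite-dimensional `R`-submodule: the resulting `L`-valued pairing is again
nondegenerate, hence perfect.

A right Serre functor `G` on a `Hom`-finite category is fully faithful, as it is faithful and
`dim C(X, Y) = dim C(Y, G X) = dim C(G X, G Y)`. If it has a left adjoint `G'`, here
`i^* ∘ F' ∘ i_*`, the unit `X ⟶ G (G' X)` is monic, and it is invertible because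
`dim C(Y, G (G' X)) = dim C(G' X, Y) = dim C(X, G Y) = dim C(Y, X)`.
-/

section ResidueFunctional

variable {K L R : Type*} [Field K] [CommRing R] [Algebra K R]

/-- The bilinear form `(x, y) ↦ χ (x * y)` attached to a functional `χ` on an algebra;
curried, it sends `r` to the translate of `χ` by `r`. -/
def mulForm (χ : Module.Dual K R) : R →ₗ[K] Module.Dual K R :=
  (LinearMap.mul K R).compr₂ χ

@[simp]
lemma mulForm_apply (χ : Module.Dual K R) (x y : R) : mulForm χ x y = χ (x * y) := rfl

lemma mulForm_flip (χ : Module.Dual K R) : (mulForm χ).flip = mulForm χ := by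
  ext x y
  simp [mul_comm]

lemma range_mulForm (χ : Module.Dual K R) [FiniteDimensional K (LinearMap.range (mulForm χ))] :
    LinearMap.range (mulForm χ) = (LinearMap.ker (mulForm χ)).dualAnnihilator := by
  rw [← Subspace.dualCoannihilator_dualAnnihilator_eq (W := LinearMap.range (mulForm χ)),
    LinearMap.dualCoannihilator_range_eq_ker_flip, mulForm_flip]

lemma exists_isMaximal_ker_mulForm_le {χ : Module.Dual K R} (hχ : χ ≠ 0) :
    ∃ m : Ideal R, m.IsMaximal ∧ LinearMap.ker (mulForm χ) ≤ m.restrictScalars K := by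
  let J : Ideal R :=
    { LinearMap.ker (mulForm χ) with
      smul_mem' := fun r x hx => LinearMap.ext fun y => by
        simpa [mul_comm, mul_left_comm] using LinearMap.congr_fun hx (r * y) }
  have hJ : J ≠ ⊤ := fun h => hχ <| by
    have h1 : (1 : R) ∈ J := h ▸ Submodule.mem_top
    ext x
    simpa using LinearMap.congr_fun (show mulForm χ 1 = 0 from h1) x
  obtain ⟨m, hm, hJm⟩ := J.exists_le_maximal hJ
  exact ⟨m, hm, hJm⟩

lemma exists_dual_ne_zero_forall_mem_eq_zero (m : Ideal R) [hm : m.IsMaximal] :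
    ∃ v : Module.Dual K R, v ≠ 0 ∧ ∀ a ∈ m, v a = 0 := by
  obtain ⟨v, hv, hmv⟩ := (m.restrictScalars K).exists_le_ker_of_lt_top
    (lt_top_iff_ne_top.2 fun h => hm.ne_top (by simpa using h))
  exact ⟨v, hv, hmv⟩

variable [Field L] [Algebra L R]

variable (K L R) in
/-- The action of `L` on `Hom_K(R, K)` by translation of the argument. It is not an instance, since
for `L = K` it would compete with the pointwise action. -/
abbrev translationModule : Module L (Module.Dual K R) where
  smul l χ := mulForm χ (algebraMap L R l)
  one_smul χ := by ext x; change χ _ = _; simp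
  mul_smul a b χ := by ext x; change χ _ = χ _; simp [mul_assoc, mul_left_comm]
  smul_zero _ := rfl
  smul_add _ _ _ := rfl
  add_smul a b χ := by ext x; change χ _ = χ _ + χ _; simp
  zero_smul χ := by ext x; change χ _ = 0; simp

lemma linearIndependent_of_forall_mem_eq_zero {v : MaximalSpectrum R → Module.Dual K R}
    (hv : ∀ m, v m ≠ 0) (hm : ∀ m, ∀ a ∈ m.asIdeal, v m a = 0) :
    letI := translationModule K L R
    LinearIndependent L v := by
  classical
  let _ := translationModule K L R
  rw [linearIndependent_iff']
  intro s g hs i hi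
  obtain ⟨r, hr⟩ := Ideal.exists_forall_sub_mem_ideal (I := fun j : s => j.1.asIdeal)
    (fun _ _ h => MaximalSpectrum.isCoprime_of_ne (Subtype.coe_ne_coe.2 h))
    (Pi.single ⟨i, hi⟩ 1)
  have hri : r - 1 ∈ i.asIdeal := by simpa using hr ⟨i, hi⟩
  have hrj : ∀ j ∈ s, j ≠ i → r ∈ j.asIdeal := fun j hj hji => by
    simpa [Pi.single_apply, hji] using hr ⟨j, hj⟩
  have hgi : g i • v i = 0 := by
    ext x
    calc (g i • v i) x = (g i • v i) (r * x) := by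
          have := hm i _ (i.asIdeal.mul_mem_left (algebraMap L R (g i))
            (i.asIdeal.mul_mem_right x hri))
          rw [sub_one_mul, mul_sub, map_sub] at this
          exact (sub_eq_zero.1 this).symm
      _ = (∑ j ∈ s, g j • v j) (r * x) := by
          rw [LinearMap.sum_apply, Finset.sum_eq_single_of_mem i hi]
          exact fun j hj hji =>
            hm j _ (j.asIdeal.mul_mem_left _ (j.asIdeal.mul_mem_right x (hrj j hj hji)))
      _ = 0 := by rw [hs, LinearMap.zero_apply]
  exact (smul_eq_zero.1 hgi).resolve_right (hv i)

variable (K L R) in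
/-- An `L`-linear form on `Hom_K(R, K)` whose kernel contains no nonzero
finite-dimensional `R`-submodule. -/
structure ResidueFunctional where
  toFun : Module.Dual K R →+ L
  map_mulForm_algebraMap : ∀ (l : L) (χ : Module.Dual K R),
    toFun (mulForm χ (algebraMap L R l)) = l * toFun χ
  eq_zero_of_mulForm : ∀ χ : Module.Dual K R,
    FiniteDimensional K (LinearMap.range (mulForm χ)) →
      (∀ r, toFun (mulForm χ r) = 0) → χ = 0

-- If `m` is a maximal ideal containing the annihilator of `χ ≠ 0` and the translates of `χ` form a
-- finite-dimensional space, then every functional killed by `m` is a translate of `χ`. So it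
-- suffices to prescribe the value `1` on one nonzero functional for each maximal ideal.
variable (K L R) in
theorem nonempty_residueFunctional : Nonempty (ResidueFunctional K L R) := by
  let _ := translationModule K L R
  choose v hv hm using fun m : MaximalSpectrum R =>
    have := m.isMaximal
    exists_dual_ne_zero_forall_mem_eq_zero (K := K) m.asIdeal
  obtain ⟨μ, hμ⟩ := Module.exists_dual_forall_apply_eq_one
    (linearIndependent_of_forall_mem_eq_zero (L := L) hv hm).linearIndepOn_univ
  refine ⟨⟨μ.toAddMonoidHom, fun l χ => map_smul μ l χ, fun χ _ hχ => ?_⟩⟩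
  by_contra hne
  obtain ⟨m, hmax, hker⟩ := exists_isMaximal_ker_mulForm_le hne
  have hvm : v ⟨m, hmax⟩ ∈ LinearMap.range (mulForm χ) := by
    rw [range_mulForm, Submodule.mem_dualAnnihilator]
    exact fun a ha => hm ⟨m, hmax⟩ a (hker ha)
  obtain ⟨r, hr⟩ := hvm
  have hμr : μ (mulForm χ r) = 0 := hχ r
  exact one_ne_zero ((hμ ⟨m, hmax⟩ (Set.mem_univ _)).symm.trans (hr ▸ hμr))

end ResidueFunctional

section PairingTransfer

variable {K L R M N : Type*} [Field K] [CommRing R] [Algebra K R] [AddCommGroup M] [Module K M]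
  [AddCommGroup N] [Module K N] [Module R N] [IsScalarTower K R N]

/-- The functional `r ↦ B m (r • n)` on `R`, as a function of `n`. -/
def coefficient (R : Type*) [CommRing R] [Algebra K R] [Module R N] [IsScalarTower K R N]
    (B : M →ₗ[K] N →ₗ[K] K) (m : M) : N →ₗ[K] Module.Dual K R :=
  (Algebra.lsmul K K N).toLinearMap.flip.compr₂ (B m)

@[simp]
lemma coefficient_apply (B : M →ₗ[K] N →ₗ[K] K) (m : M) (n : N) (r : R) :
    coefficient R B m n r = B m (r • n) := rfl

lemma mulForm_coefficient (B : M →ₗ[K] N →ₗ[K] K) (m : M) (n : N) (r : R) :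
    mulForm (coefficient R B m n) r = coefficient R B m (r • n) := by
  ext x
  simp [smul_smul, mul_comm]

lemma coefficient_smul_left [Module R M] {B : M →ₗ[K] N →ₗ[K] K}
    (hB : ∀ (r : R) m n, B (r • m) n = B m (r • n)) (r : R) (m : M) (n : N) :
    coefficient R B (r • m) n = coefficient R B m (r • n) := by
  ext x
  simp [hB, smul_smul, mul_comm]

instance finiteDimensional_range_mulForm_coefficient [FiniteDimensional K N]
    (B : M →ₗ[K] N →ₗ[K] K) (m : M) (n : N) :
    FiniteDimensional K (LinearMap.range (mulForm (coefficient R B m n))) := by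
  have hle : LinearMap.range (mulForm (coefficient R B m n)) ≤
      LinearMap.range (coefficient R B m) := by
    rintro _ ⟨r, rfl⟩
    exact ⟨r • n, (mulForm_coefficient B m n r).symm⟩
  exact Submodule.finiteDimensional_of_le hle

variable [Field L] [Algebra L R] [Module R M] [Module L M] [IsScalarTower L R M] [Module L N]
  [IsScalarTower L R N]

/-- The `L`-bilinear pairing `(m, n) ↦ μ (r ↦ B m (r • n))` obtained from an `R`-balanced
`K`-bilinear pairing `B` by changing the base field along `μ`. -/
def ResidueFunctional.pairing (μ : ResidueFunctional K L R) (B : M →ₗ[K] N →ₗ[K] K)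
    (hB : ∀ (r : R) m n, B (r • m) n = B m (r • n)) : M →ₗ[L] N →ₗ[L] L :=
  LinearMap.mk₂ L (fun m n => μ.toFun (coefficient R B m n))
    (fun m m' n => by
      rw [← map_add]
      congr 1
      ext
      simp)
    (fun l m n => by
      rw [← algebraMap_smul R l m, coefficient_smul_left hB, ← mulForm_coefficient,
        μ.map_mulForm_algebraMap, smul_eq_mul])
    (fun m n n' => by rw [map_add, map_add])
    (fun l m n => by
      rw [← algebraMap_smul R l n, ← mulForm_coefficient, μ.map_mulForm_algebraMap, smul_eq_mul])

lemma ResidueFunctional.pairing_apply (μ : ResidueFunctional K L R) (B : M →ₗ[K] N →ₗ[K] K)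
    (hB : ∀ (r : R) m n, B (r • m) n = B m (r • n)) (m : M) (n : N) :
    μ.pairing B hB m n = μ.toFun (coefficient R B m n) := rfl

lemma ResidueFunctional.pairing_injective [FiniteDimensional K N] (μ : ResidueFunctional K L R)
    (B : M →ₗ[K] N →ₗ[K] K) (hB : ∀ (r : R) m n, B (r • m) n = B m (r • n))
    (hinj : Function.Injective B) : Function.Injective (μ.pairing B hB) := by
  rw [injective_iff_map_eq_zero]
  intro m hm
  refine (map_eq_zero_iff B hinj).1 (LinearMap.ext fun n => ?_)
  have hcoeff : coefficient R B m n = 0 :=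
    μ.eq_zero_of_mulForm _ inferInstance fun r => by
      rw [mulForm_coefficient, ← pairing_apply μ B hB, hm, LinearMap.zero_apply]
  simpa using LinearMap.congr_fun hcoeff 1

lemma ResidueFunctional.pairing_flip [IsScalarTower K R M] (μ : ResidueFunctional K L R)
    (B : M →ₗ[K] N →ₗ[K] K) (hB : ∀ (r : R) m n, B (r • m) n = B m (r • n)) :
    (μ.pairing B hB).flip = μ.pairing B.flip fun r n m => (hB r m n).symm := by
  ext n m
  change μ.toFun (coefficient R B m n) = μ.toFun (coefficient R B.flip n m)
  congr 1
  ext r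
  simp [hB]

theorem ResidueFunctional.isPerfPair_pairing [IsScalarTower K R M] [FiniteDimensional K M]
    [FiniteDimensional K N] [FiniteDimensional L M] (μ : ResidueFunctional K L R)
    (B : M →ₗ[K] N →ₗ[K] K) [B.IsPerfPair] (hB : ∀ (r : R) m n, B (r • m) n = B m (r • n)) :
    (μ.pairing B hB).IsPerfPair :=
  .of_injective (μ.pairing_injective B hB (LinearMap.IsPerfPair.bijective_left B).injective) <| by
    rw [pairing_flip]
    exact μ.pairing_injective _ _ (LinearMap.IsPerfPair.bijective_right B).injective

end PairingTransfer

/-- Every preadditive category is linear over its center. The scalar multiplication is that of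
`CatCenter.smul_eq`. -/
abbrev linearCatCenter (C : Type*) [Category C] [Preadditive C] :
    CategoryTheory.Linear (CatCenter C) C where
  homModule X Y :=
    { one_smul := fun f => Category.comp_id f
      mul_smul := fun z w f => (Category.assoc f _ _).symm
      smul_zero := fun z => Limits.zero_comp
      zero_smul := fun f => Limits.comp_zero
      smul_add := fun z f g => Preadditive.add_comp _ _ _ f g _
      add_smul := fun z w f => Preadditive.comp_add _ _ _ f _ _ }
  smul_comp X Y Z z f g := by simp only [CatCenter.smul_eq', Category.assoc]
  comp_smul X Y Z f z g := by simp only [CatCenter.smul_eq, Category.assoc]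

lemma isScalarTower_catCenter (K : Type*) {C : Type*} [CommRing K] [Category C] [Preadditive C]
    [CategoryTheory.Linear K C] (X Y : C) : IsScalarTower K (CatCenter C) (X ⟶ Y) where
  smul_assoc c z f := by
    change f ≫ (c • z.app Y) = c • (f ≫ z.app Y)
    simp

namespace RightSerreStructure

section BaseChange

variable {K L C : Type*} [Field K] [Field L] [Category C] [Preadditive C]
  [CategoryTheory.Linear K C] [CategoryTheory.Linear L C] {G : C ⥤ C}

lemma equiv_smul {R : Type*} [Semiring R] [CategoryTheory.Linear R C]
    (σ : RightSerreStructure K C G) (r : R) {X Y : C} (φ : X ⟶ Y) (u : Y ⟶ G.obj X) :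
    σ.equiv X Y (r • φ) u = σ.equiv X Y φ (r • u) := by
  simpa using σ.naturality_right φ (r • 𝟙 Y) u

/-- The Serre structure over `L` induced from one over `K` by a residue functional on a commutative
ring `R` acting on `C` compatibly with both fields. -/
noncomputable def baseChange {R : Type*} [CommRing R] [Algebra K R] [Algebra L R]
    [CategoryTheory.Linear R C] [∀ X Y : C, IsScalarTower K R (X ⟶ Y)]
    [∀ X Y : C, IsScalarTower L R (X ⟶ Y)]
    [∀ X Y : C, FiniteDimensional K (X ⟶ Y)] [∀ X Y : C, FiniteDimensional L (X ⟶ Y)]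
    (μ : ResidueFunctional K L R) (σ : RightSerreStructure K C G) :
    RightSerreStructure L C G where
  equiv X Y :=
    have := μ.isPerfPair_pairing (σ.equiv X Y).toLinearMap fun r φ u => σ.equiv_smul r φ u
    (μ.pairing (σ.equiv X Y).toLinearMap fun r φ u => σ.equiv_smul r φ u).toPerfPair
  naturality_left f φ u := by
    simp only [LinearMap.toPerfPair_apply, ResidueFunctional.pairing_apply]
    congr 1
    ext r
    simp [σ.naturality_left]
  naturality_right φ g u := by
    simp only [LinearMap.toPerfPair_apply, ResidueFunctional.pairing_apply]
    congr 1
    ext r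
    simp [σ.naturality_right]

open scoped IsMulCommutative in
variable (L) in
theorem nonempty_of_homFinite [∀ X Y : C, FiniteDimensional K (X ⟶ Y)]
    [∀ X Y : C, FiniteDimensional L (X ⟶ Y)] (σ : RightSerreStructure K C G) :
    Nonempty (RightSerreStructure L C G) := by
  let _ := linearCatCenter C
  have := isScalarTower_catCenter K (C := C)
  have := isScalarTower_catCenter L (C := C)
  exact (nonempty_residueFunctional K L (CatCenter C)).map σ.baseChange

end BaseChange

section FullyFaithful

variable {k C : Type*} [Field k] [Category C] [Preadditive C] [CategoryTheory.Linear k C]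
  {G : C ⥤ C} (σ : RightSerreStructure k C G)
include σ

lemma equiv_map {X Y : C} (f : X ⟶ Y) (φ : Y ⟶ G.obj X) :
    σ.equiv Y (G.obj X) φ (G.map f) = σ.equiv X (G.obj X) (f ≫ φ) (𝟙 _) := by
  rw [σ.naturality_left, Category.id_comp]

lemma hom_ext {X Y : C} {u u' : Y ⟶ G.obj X}
    (h : ∀ φ : X ⟶ Y, σ.equiv X Y φ u = σ.equiv X Y φ u') : u = u' := by
  rw [← sub_eq_zero, ← Module.forall_dual_apply_eq_zero_iff k]
  intro ξ
  obtain ⟨φ, rfl⟩ := (σ.equiv X Y).surjective ξ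
  rw [map_sub, h, sub_self]

lemma additive : G.Additive where
  map_add := σ.hom_ext fun φ => by
    rw [map_add, equiv_map, equiv_map, equiv_map, Preadditive.add_comp, map_add,
      LinearMap.add_apply]

lemma linear : haveI := σ.additive; G.Linear k :=
  haveI := σ.additive
  { map_smul := fun f c => σ.hom_ext fun φ => by
      rw [map_smul, equiv_map, equiv_map, Linear.smul_comp, map_smul, LinearMap.smul_apply] }

lemma equiv_eq_equiv_id_comp_map {X Y : C} (f : X ⟶ Y) (u : Y ⟶ G.obj X) :
    σ.equiv X Y f u = σ.equiv Y Y (𝟙 Y) (u ≫ G.map f) := by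
  simpa using σ.naturality_left f (𝟙 Y) u

lemma equiv_eq_equiv_id_comp {X Y : C} (f : X ⟶ Y) (u : Y ⟶ G.obj X) :
    σ.equiv X Y f u = σ.equiv X X (𝟙 X) (f ≫ u) := by
  simpa using σ.naturality_right (𝟙 X) f u

lemma faithful : G.Faithful where
  map_injective {X Y} f g h := (σ.equiv X Y).injective <| LinearMap.ext fun u => by
    rw [equiv_eq_equiv_id_comp_map, h, ← equiv_eq_equiv_id_comp_map]

lemma finrank_hom (X Y : C) : Module.finrank k (X ⟶ Y) = Module.finrank k (Y ⟶ G.obj X) := by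
  rw [(σ.equiv X Y).finrank_eq, Subspace.dual_finrank_eq]

lemma full [∀ X Y : C, FiniteDimensional k (X ⟶ Y)] : G.Full where
  map_surjective {X Y} := by
    have := σ.additive
    have := σ.linear
    have := σ.faithful
    have hfinrank := (σ.finrank_hom X Y).trans (σ.finrank_hom Y (G.obj X))
    exact (LinearMap.injective_iff_surjective_of_finrank_eq_finrank
      (f := G.mapLinearMap k) hfinrank).1 G.map_injective

variable {G' : C ⥤ C} (adj : G' ⊣ G)
include adj

lemma mono_unit_app (X : C) : Mono (adj.unit.app X) where
  right_cancellation {Y} (f g : Y ⟶ X) h := (σ.equiv Y X).injective <| LinearMap.ext fun u => by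
    obtain ⟨w, rfl⟩ := (adj.homEquiv X Y).surjective u
    have hfg : f ≫ adj.homEquiv X Y w = g ≫ adj.homEquiv X Y w := by
      rw [adj.homEquiv_unit, reassoc_of% h]
    rw [equiv_eq_equiv_id_comp, hfg, ← equiv_eq_equiv_id_comp]

lemma finrank_hom_obj_obj (X Y : C) :
    Module.finrank k (Y ⟶ G.obj (G'.obj X)) = Module.finrank k (Y ⟶ X) := by
  have := σ.additive
  have := σ.linear
  have := adj.left_adjoint_additive
  rw [← σ.finrank_hom, σ.finrank_hom Y X]
  exact ((adj.homAddEquiv X Y).toLinearEquiv fun c f => by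
    simp [Adjunction.homEquiv_unit, Functor.map_smul]).finrank_eq

variable [∀ X Y : C, FiniteDimensional k (X ⟶ Y)]

lemma isIso_unit_app (X : C) : IsIso (adj.unit.app X) := by
  have := σ.mono_unit_app adj X
  refine isIso_of_yoneda_map_bijective _ fun Y => ?_
  have hinj : Function.Injective (Linear.rightComp k Y (adj.unit.app X)) :=
    fun f g h => (cancel_mono _).1 h
  exact ⟨hinj, (LinearMap.injective_iff_surjective_of_finrank_eq_finrank
    (σ.finrank_hom_obj_obj adj X Y).symm).1 hinj⟩

/-- A right Serre functor on a `Hom`-finite category which has a left adjoint is an equivalence. -/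
noncomputable def equivalenceOfLeftAdjoint : C ≌ C :=
  have := σ.full
  have := σ.faithful
  have := σ.isIso_unit_app adj
  adj.toEquivalence

end FullyFaithful

end RightSerreStructure

section Restriction

variable {k S T : Type*} [Field k] [Category S] [Category T] [Preadditive S] [Preadditive T]
  [CategoryTheory.Linear k T] {i : S ⥤ T}

variable (k) in
/-- The linear structure on `S` making a fully faithful additive functor `S ⥤ T` linear. When `S` is
linear to begin with, the two structures can differ, as `S ⥤ T` need not be linear. -/
abbrev linearOfFullyFaithful [i.Additive] (hi : i.FullyFaithful) : CategoryTheory.Linear k S where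
  homModule X Y :=
    letI : SMul k (X ⟶ Y) := ⟨fun c f => hi.preimage (c • i.map f)⟩
    Function.Injective.module k i.mapAddHom (hi.map_bijective X Y).injective
      fun c f => hi.map_preimage _
  smul_comp X Y Z c f g := hi.map_injective <| by
    change i.map (hi.preimage _ ≫ g) = i.map (hi.preimage _)
    simp
  comp_smul X Y Z f c g := hi.map_injective <| by
    change i.map (f ≫ hi.preimage _) = i.map (hi.preimage _)
    simp

lemma linear_linearOfFullyFaithful [i.Additive] (hi : i.FullyFaithful) :
    letI := linearOfFullyFaithful k hi
    i.Linear k :=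
  letI := linearOfFullyFaithful k hi
  { map_smul := fun _ _ => hi.map_preimage _ }

variable [CategoryTheory.Linear k S] [i.Additive] [i.Linear k]

lemma finiteDimensional_hom_of_faithful [i.Faithful] [∀ X Y : T, FiniteDimensional k (X ⟶ Y)]
    (X Y : S) : FiniteDimensional k (X ⟶ Y) :=
  .of_injective (i.mapLinearMap k) i.map_injective

variable (k) in
/-- The bijection on morphisms given by a fully faithful linear functor, as a linear equivalence. -/
def mapLinearEquiv (hi : i.FullyFaithful) (X Y : S) : (X ⟶ Y) ≃ₗ[k] (i.obj X ⟶ i.obj Y) :=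
  hi.homEquiv.toLinearEquiv (i.mapLinearMap k).isLinear

@[simp]
lemma mapLinearEquiv_apply (hi : i.FullyFaithful) {X Y : S} (f : X ⟶ Y) :
    mapLinearEquiv k hi X Y f = i.map f := rfl

variable (k) in
/-- The linear version of `Adjunction.homAddEquiv`, for a linear left adjoint. -/
def adjunctionHomLinearEquiv {r : T ⥤ S} (adj : i ⊣ r) (X : S) (Y : T) :
    (i.obj X ⟶ Y) ≃ₗ[k] (X ⟶ r.obj Y) :=
  ((adj.homAddEquiv X Y).symm.toLinearEquiv fun c f => by
    simp [Adjunction.homEquiv_counit, Functor.map_smul]).symm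

@[simp]
lemma adjunctionHomLinearEquiv_symm_apply {r : T ⥤ S} (adj : i ⊣ r) {X : S} {Y : T}
    (u : X ⟶ r.obj Y) :
    (adjunctionHomLinearEquiv k adj X Y).symm u = i.map u ≫ adj.counit.app Y :=
  adj.homEquiv_counit X Y u

/-- A right Serre functor on `T` restricts to the full subcategory `S`, provided that the inclusion
has a right adjoint: `S(X, Y) ≅ T(iX, iY) ≅ T(iY, F(iX))^∨ ≅ S(Y, r(F(iX)))^∨`. -/
def RightSerreStructure.restrict {F : T ⥤ T} (σ : RightSerreStructure k T F)
    (hi : i.FullyFaithful) {r : T ⥤ S} (adj : i ⊣ r) :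
    RightSerreStructure k S (i ⋙ F ⋙ r) where
  equiv X Y := (mapLinearEquiv k hi X Y).trans <|
    (σ.equiv (i.obj X) (i.obj Y)).trans
      (adjunctionHomLinearEquiv k adj Y (F.obj (i.obj X))).symm.dualMap
  naturality_left f φ u := by
    simp [σ.naturality_left]
  naturality_right φ g u := by
    simp [σ.naturality_right]

end Restriction

theorem nonempty_rightSerreStructure_restrict {k l S T : Type*} [Field k] [Field l] [Category S]
    [Category T] [Preadditive S] [Preadditive T] [CategoryTheory.Linear l S]
    [CategoryTheory.Linear k T] [∀ X Y : S, FiniteDimensional l (X ⟶ Y)]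
    [∀ X Y : T, FiniteDimensional k (X ⟶ Y)] {i : S ⥤ T} [i.Additive] (hi : i.FullyFaithful)
    {r : T ⥤ S} (adj : i ⊣ r) {F : T ⥤ T} (σ : RightSerreStructure k T F) :
    Nonempty (RightSerreStructure l S (i ⋙ F ⋙ r)) := by
  let _ := linearOfFullyFaithful k hi
  have := linear_linearOfFullyFaithful (k := k) hi
  have := hi.faithful
  have := finiteDimensional_hom_of_faithful (k := k) (i := i)
  exact (σ.restrict hi adj).nonempty_of_homFinite l

theorem recollement_serre_functor_on_S_general {k l S T : Type*} [Field k] [Field l] [Category S]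
    [Category T] [Preadditive S] [Preadditive T] [CategoryTheory.Linear l S]
    [CategoryTheory.Linear k T] [∀ X Y : S, FiniteDimensional l (X ⟶ Y)]
    [∀ X Y : T, FiniteDimensional k (X ⟶ Y)] {i : S ⥤ T} [i.Additive] (hi : i.FullyFaithful)
    {iUp iSh : T ⥤ S} (adj₁ : iUp ⊣ i) (adj₂ : i ⊣ iSh) {F F' : T ⥤ T}
    (σ : RightSerreStructure k T F) (adj : F' ⊣ F) :
    Nonempty (RightSerreStructure l S (i ⋙ F ⋙ iSh)) ∧
      (i ⋙ F ⋙ iSh).EssSurj ∧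
      Nonempty ((i ⋙ F ⋙ iSh) ⋙ (i ⋙ F' ⋙ iUp) ≅ 𝟭 S) ∧
      Nonempty ((i ⋙ F' ⋙ iUp) ⋙ (i ⋙ F ⋙ iSh) ≅ 𝟭 S) := by
  obtain ⟨τ⟩ := nonempty_rightSerreStructure_restrict (l := l) hi adj₂ σ
  let e : S ≌ S := τ.equivalenceOfLeftAdjoint (adj₂.comp (adj.comp adj₁))
  exact ⟨⟨τ⟩, e.isEquivalence_inverse.essSurj, ⟨e.counitIso⟩, ⟨e.unitIso.symm⟩⟩

lemma Recollement.additive_iSt {S T U : Type*} [Category S] [Category T] [Category U]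
    [HasZeroObject S] [HasZeroObject T] [HasZeroObject U]
    [Preadditive S] [Preadditive T] [Preadditive U]
    [HasShift S ℤ] [HasShift T ℤ] [HasShift U ℤ]
    [∀ n : ℤ, (shiftFunctor S n).Additive] [∀ n : ℤ, (shiftFunctor T n).Additive]
    [∀ n : ℤ, (shiftFunctor U n).Additive]
    [Pretriangulated S] [Pretriangulated T] [Pretriangulated U]
    (R : Recollement S T U) : R.iSt.Additive :=
  letI := R.commShift_iSt
  haveI := R.isTriangulated_iSt
  inferInstance

/-- Given a recollement `(S, T, U)` and a Serre functor `F` on `T` with quasi-inverse `F'`,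
`S` has a Serre functor, namely `i^! ∘ F ∘ i_*`, with quasi-inverse `i^* ∘ F' ∘ i_*`. -/
theorem recollement_serre_functor_on_S
    {k : Type u₄} [Field k]
    {S : Type u₁} {T : Type u₂} {U : Type u₃}
    [Category.{v₁} S] [Category.{v₂} T] [Category.{v₃} U]
    [HasZeroObject S] [HasZeroObject T] [HasZeroObject U]
    [Preadditive S] [Preadditive T] [Preadditive U]
    [CategoryTheory.Linear k S] [CategoryTheory.Linear k T] [CategoryTheory.Linear k U]
    [HasShift S ℤ] [HasShift T ℤ] [HasShift U ℤ]
    [∀ n : ℤ, (shiftFunctor S n).Additive] [∀ n : ℤ, (shiftFunctor T n).Additive]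
    [∀ n : ℤ, (shiftFunctor U n).Additive]
    [Pretriangulated S] [Pretriangulated T] [Pretriangulated U]
    [EssentiallySmall.{v₁} S] [EssentiallySmall.{v₂} T] [EssentiallySmall.{v₃} U]
    [∀ X Y : S, FiniteDimensional k (X ⟶ Y)]
    [∀ X Y : T, FiniteDimensional k (X ⟶ Y)]
    [∀ X Y : U, FiniteDimensional k (X ⟶ Y)]
    [IsIdempotentComplete T]
    (R : Recollement S T U)
    (SF : SerreFunctor k T) (F' : T ⥤ T)
    (η : SF.F ⋙ F' ≅ 𝟭 T) (ε : F' ⋙ SF.F ≅ 𝟭 T) :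
    Nonempty (RightSerreStructure k S (R.iSt ⋙ SF.F ⋙ R.iSh)) ∧
      (R.iSt ⋙ SF.F ⋙ R.iSh).EssSurj ∧
      Nonempty ((R.iSt ⋙ SF.F ⋙ R.iSh) ⋙ (R.iSt ⋙ F' ⋙ R.iUp) ≅ 𝟭 S) ∧
      Nonempty ((R.iSt ⋙ F' ⋙ R.iUp) ⋙ (R.iSt ⋙ SF.F ⋙ R.iSh) ≅ 𝟭 S) := by
  have := R.additive_iSt
  exact recollement_serre_functor_on_S_general R.fullyFaithful_iSt R.adj₁ R.adj₂ SF.rightSerre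
    (CategoryTheory.Equivalence.mk F' SF.F ε.symm η).toAdjunction
end

section
/- Given a recollement (S, T, U) and a Serre functor F on T with quasi-inverse F', the category U has a Serre functor, namely j^* ∘ F ∘ j_!, and j^* ∘ F' ∘ j_* is a quasi-inverse of it. -/
/-!
Setting: `k` a field; `S`, `T`, `U` skeletally small `k`-linear triangulated categories
with finite-dimensional Hom-spaces, `T` with split idempotents.  A recollement
`(S, T, U)` as in [BBD], and (right/left) Serre functors in the sense of
Reiten–Van den Bergh.
-/

open CategoryTheory CategoryTheory.Limits CategoryTheory.Pretriangulated

universe v₁ v₂ v₃ u₁ u₂ u₃ u₄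

universe u₅

/-!
Since `j_!` is fully faithful and left adjoint to `j^*`, Serre duality on `T` gives
`U(X, Y) ≅ T(j_! X, j_! Y) ≅ T(j_! Y, F j_! X)^∨ ≅ U(Y, j^* F j_! X)^∨`. The functors of a
recollement are only additive, however, so these duals refer to the linear structure transported
from `T` along `j_!`, which can differ from the given one on `U`.

The two structures are compared through the center `Z` of `U`, to which both fields `k` and `K` map.
For a `Z`-module `N` the dual `Hom_k(N, k)` is `Hom_Z(N, Hom_k(Z, k))`, and composition with a
`K`-linear form `l` on `Hom_k(Z, k)` leads to `Hom_K(N, K)`. If `N` is finite over both fields, this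
is bijective as soon as `l` vanishes on no nonzero `k`-finite `Z`-submodule of `Hom_k(Z, k)`. Now a
`k`-finite `Z`-submodule of `Hom_k(Z, k)` is determined by its annihilator, so isomorphic ones are
equal: the `k`-finite simple submodules are isotypic components, hence linearly independent, and
some `l` is nonzero on each of them.

For the quasi-inverse, Serre duality turns `T(j_! V, i_* A) = 0` into `T(i_* A, F j_! V) = 0`, so
the unit `F j_! ⟶ j_* j^* F j_!` is invertible and
`j^* F' j_* j^* F j_! ≅ j^* F' F j_! ≅ j^* j_! ≅ 𝟭`. The other composite is dual.
-/

theorem exists_dual_forall_isotypicComponents (K Z M : Type*) [Field K] [Ring Z] [Algebra K Z]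
    [AddCommGroup M] [Module K M] [Module Z M] [IsScalarTower K Z M] :
    ∃ l : Module.Dual K M, ∀ C ∈ isotypicComponents Z M, ∃ x ∈ C, l x ≠ 0 := by
  have hne (C : isotypicComponents Z M) : ∃ x ∈ C.1, x ≠ 0 :=
    C.1.ne_bot_iff.1 (bot_lt_isotypicComponents C.2).ne'
  choose x hxC hx0 using hne
  have hindep : iSupIndep fun C : isotypicComponents Z M ↦ C.1.restrictScalars K :=
    (iSupIndep_iff_finsetSum_eq_zero_imp_eq_zero _).2
      ((iSupIndep_iff_finsetSum_eq_zero_imp_eq_zero fun C : isotypicComponents Z M ↦ C.1).1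
        ((sSupIndep_iff _).1 (sSupIndep_isotypicComponents Z M)))
  have hlin : LinearIndependent K x := hindep.linearIndependent _ hxC hx0
  obtain ⟨l, hl⟩ :=
    Module.exists_dual_forall_apply_eq_one (linearIndepOn_univ_iff.2 hlin)
  refine ⟨l, fun C hC ↦ ⟨x ⟨C, hC⟩, hxC ⟨C, hC⟩, ?_⟩⟩
  rw [hl _ (Set.mem_univ _)]
  exact one_ne_zero

theorem exists_isSimpleModule_le {Z M : Type*} [Ring Z] [AddCommGroup M] [Module Z M]
    {W : Submodule Z M} [IsArtinian Z W] (hW : W ≠ ⊥) : ∃ A ≤ W, IsSimpleModule Z A := by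
  have : Nontrivial W := Submodule.nontrivial_iff_ne_bot.2 hW
  obtain ⟨A, hA⟩ := IsAtomic.exists_atom (Submodule Z W)
  have : IsSimpleModule Z A := isSimpleModule_iff_isAtom.2 hA
  exact ⟨A.map W.subtype, W.map_subtype_le A,
    .congr (A.equivMapOfInjective _ W.subtype_injective).symm⟩

/-- The coinduced module `Hom_k(Z, k)` of a commutative `k`-algebra `Z`. Every scalar acts through
`Z` on the argument, so that the coinduced module is also a module over any other ring mapping
to `Z`; this differs from `Module.Dual k Z`, whose scalars act on the values. -/
def Coinduced (k Z : Type*) [CommRing k] [CommRing Z] [Algebra k Z] : Type _ :=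
  Module.Dual k Z

namespace Coinduced

section CommRing

variable {k Z : Type*} [CommRing k] [CommRing Z] [Algebra k Z]

instance : AddCommGroup (Coinduced k Z) :=
  inferInstanceAs (AddCommGroup (Module.Dual k Z))

instance : FunLike (Coinduced k Z) Z k :=
  inferInstanceAs (FunLike (Module.Dual k Z) Z k)

instance : LinearMapClass (Coinduced k Z) k Z k :=
  inferInstanceAs (LinearMapClass (Module.Dual k Z) k Z k)

@[ext]
theorem ext {f g : Coinduced k Z} (h : ∀ z, f z = g z) : f = g :=
  DFunLike.ext f g h

@[simp]
theorem add_apply (f g : Coinduced k Z) (z : Z) : (f + g) z = f z + g z := rfl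

@[simp]
theorem zero_apply (z : Z) : (0 : Coinduced k Z) z = 0 := rfl

section Module

variable {R : Type*} [CommSemiring R] [Algebra R Z]

instance : SMul R (Coinduced k Z) where
  smul r f := LinearMap.comp (f : Module.Dual k Z) (LinearMap.mulLeft k (algebraMap R Z r))

@[simp]
theorem smul_apply (r : R) (f : Coinduced k Z) (z : Z) : (r • f) z = f (r • z) :=
  congrArg f (Algebra.smul_def r z).symm

instance : Module R (Coinduced k Z) where
  one_smul f := by ext; simp
  mul_smul r s f := by ext; simp [mul_smul, smul_comm r s]
  smul_zero r := by ext; simp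
  smul_add r f g := by ext; simp
  add_smul r s f := by ext; simp [add_smul]
  zero_smul f := by ext; simp

instance : IsScalarTower R Z (Coinduced k Z) where
  smul_assoc r z f := by ext; simp

end Module

/-- The identity map from the coinduced module to the dual of `Z`. -/
def toDual : Coinduced k Z ≃ₗ[k] Module.Dual k Z where
  __ := AddEquiv.refl (Module.Dual k Z)
  map_smul' c f := LinearMap.ext fun z ↦ (smul_apply c f z).trans (map_smul f c z)

theorem mem_annihilator_iff (W : Submodule Z (Coinduced k Z)) (z : Z) :
    z ∈ W.annihilator ↔ ∀ f ∈ W, f z = 0 := by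
  rw [Submodule.mem_annihilator]
  refine ⟨fun h f hf ↦ ?_, fun h f hf ↦ ?_⟩
  · simpa using DFunLike.congr_fun (h f hf) 1
  · ext w
    simpa [mul_comm z w] using h (w • f) (W.smul_mem w hf)

variable {N : Type*} [AddCommGroup N] [Module k N] [Module Z N] [IsScalarTower k Z N]

variable (k Z N) in
/-- The adjunction isomorphism between `Z`-linear maps to the coinduced module and the dual. -/
def homEquiv : (N →ₗ[Z] Coinduced k Z) ≃ₗ[k] Module.Dual k N where
  toFun ψ :=
    { toFun n := ψ n 1
      map_add' := by simp
      map_smul' c n := by rw [← algebraMap_smul Z c n]; simp [Algebra.algebraMap_eq_smul_one] }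
  map_add' _ _ := rfl
  map_smul' c ψ := by ext n; simp
  invFun ξ :=
    { toFun n := toDual.symm (ξ ∘ₗ (LinearMap.toSpanSingleton Z N n).restrictScalars k)
      map_add' n n' := ext fun z ↦ (congrArg ξ (smul_add z n n')).trans (map_add ξ _ _)
      map_smul' w n := ext fun z ↦ congrArg ξ (by simp [smul_smul, mul_comm]) }
  left_inv ψ := by
    ext n z
    exact (DFunLike.congr_fun (map_smul ψ z n) 1).trans (by simp)
  right_inv ξ := by
    ext n
    exact congrArg ξ (one_smul Z n)

end CommRing

variable {k Z : Type*} [Field k] [CommRing Z] [Algebra k Z]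

theorem mem_iff_forall_annihilator (W : Submodule Z (Coinduced k Z)) [FiniteDimensional k W]
    (f : Coinduced k Z) : f ∈ W ↔ ∀ z ∈ W.annihilator, f z = 0 := by
  let W' : Subspace k (Module.Dual k Z) := (W.restrictScalars k).map toDual.toLinearMap
  have : FiniteDimensional k (W.restrictScalars k) := ‹FiniteDimensional k W›
  have hf : f ∈ W ↔ toDual f ∈ W' :=
    (Submodule.mem_map_equiv (e := toDual) (W.restrictScalars k)).symm
  have hW' (z : Z) : z ∈ W'.dualCoannihilator ↔ z ∈ W.annihilator := by
    rw [Submodule.mem_dualCoannihilator, mem_annihilator_iff]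
    exact Set.forall_mem_image
  rw [hf, ← Subspace.dualCoannihilator_dualAnnihilator_eq (W := W'), Submodule.mem_dualAnnihilator]
  simp_rw [hW']
  rfl

theorem eq_of_annihilator_eq {W W' : Submodule Z (Coinduced k Z)} [FiniteDimensional k W]
    [FiniteDimensional k W'] (h : W.annihilator = W'.annihilator) : W = W' := by
  ext f
  rw [mem_iff_forall_annihilator, mem_iff_forall_annihilator, h]

theorem isotypicComponent_eq (W : Submodule Z (Coinduced k Z)) [FiniteDimensional k W] :
    isotypicComponent Z (Coinduced k Z) W = W := by
  refine le_antisymm (sSup_le ?_) W.le_isotypicComponent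
  rintro W' ⟨e⟩
  have : FiniteDimensional k W' := .equiv (e.symm.restrictScalars k)
  exact (eq_of_annihilator_eq e.annihilator_eq).le

/-- A `K`-linear form on the coinduced module is nondegenerate if it vanishes on no nonzero
`Z`-submodule of finite dimension over `k`. -/
def IsNondegenerate {K : Type*} [Field K] [Algebra K Z]
    (l : Module.Dual K (Coinduced k Z)) : Prop :=
  ∀ W : Submodule Z (Coinduced k Z), FiniteDimensional k W → (∀ f ∈ W, l f = 0) → W = ⊥

variable (k Z) in
theorem exists_isNondegenerate (K : Type*) [Field K] [Algebra K Z] :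
    ∃ l : Module.Dual K (Coinduced k Z), IsNondegenerate l := by
  obtain ⟨l, hl⟩ := exists_dual_forall_isotypicComponents K Z (Coinduced k Z)
  refine ⟨l, fun W hW hlW ↦ by_contra fun hne ↦ ?_⟩
  have : IsArtinian Z W := isArtinian_of_tower k inferInstance
  obtain ⟨A, hAW, hA⟩ := exists_isSimpleModule_le hne
  have : FiniteDimensional k A :=
    .of_injective ((Submodule.inclusion hAW).restrictScalars k) (Submodule.inclusion_injective hAW)
  obtain ⟨f, hf, hlf⟩ := hl A ⟨A, hA, (isotypicComponent_eq A).symm⟩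
  exact hlf (hlW f (hAW hf))

variable {N : Type*} [AddCommGroup N] [Module k N] [Module Z N] [IsScalarTower k Z N]

theorem IsNondegenerate.eq_zero {K : Type*} [Field K] [Algebra K Z]
    {l : Module.Dual K (Coinduced k Z)} (hl : IsNondegenerate l) [FiniteDimensional k N]
    {ψ : N →ₗ[Z] Coinduced k Z} (hψ : ∀ n, l (ψ n) = 0) : ψ = 0 := by
  have : FiniteDimensional k ψ.range :=
    .of_surjective (ψ.rangeRestrict.restrictScalars k) ψ.surjective_rangeRestrict
  refine LinearMap.range_eq_bot.1 (hl ψ.range this ?_)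
  rintro _ ⟨n, rfl⟩
  exact hψ n

theorem eq_zero_of_forall_linearMap_apply_eq_zero {n : N}
    (h : ∀ ψ : N →ₗ[Z] Coinduced k Z, ψ n = 0) : n = 0 := by
  refine (Module.forall_dual_apply_eq_zero_iff k n).1 fun ξ ↦ ?_
  obtain ⟨ψ, rfl⟩ := (homEquiv k Z N).surjective ξ
  exact DFunLike.congr_fun (h ψ) 1

variable {K : Type*} [Field K] [Algebra K Z] [Module K N] [IsScalarTower K Z N]

/-- Composition with a `K`-linear form on the coinduced module. -/
def compForm (l : Module.Dual K (Coinduced k Z)) :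
    (N →ₗ[Z] Coinduced k Z) →ₗ[K] Module.Dual K N where
  toFun ψ := l ∘ₗ ψ.restrictScalars K
  map_add' ψ ψ' := by ext; simp
  map_smul' c ψ := by ext; simp

theorem IsNondegenerate.bijective_compForm {l : Module.Dual K (Coinduced k Z)}
    (hl : IsNondegenerate l) [FiniteDimensional k N] [FiniteDimensional K N] :
    Function.Bijective (compForm (N := N) l) := by
  have : FiniteDimensional k (N →ₗ[Z] Coinduced k Z) := .equiv (homEquiv k Z N).symm
  have hinj : Function.Injective (compForm (N := N) l) :=
    (injective_iff_map_eq_zero _).2 fun ψ hψ ↦ hl.eq_zero (LinearMap.congr_fun hψ)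
  have hinj' : Function.Injective (compForm (N := N) l).flip :=
    (injective_iff_map_eq_zero _).2 fun n hn ↦ eq_zero_of_forall_linearMap_apply_eq_zero fun ψ ↦
      LinearMap.congr_fun (hl.eq_zero (ψ := LinearMap.applyₗ n) (LinearMap.congr_fun hn)) ψ
  have := LinearMap.IsPerfPair.of_injective' hinj hinj'
  exact LinearMap.IsPerfPair.bijective_left (compForm (N := N) l)

end Coinduced

section Linear

variable {C : Type u₁} [Category.{v₁} C] [Preadditive C]

open scoped IsMulCommutative

instance : Linear (CatCenter C) C where
  homModule X Y :=
    { one_smul := Category.comp_id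
      mul_smul z w f := by simp [CatCenter.smul_eq]
      smul_zero _ := zero_comp
      smul_add z f g := Preadditive.add_comp ..
      add_smul z w f := by simp [CatCenter.smul_eq]
      zero_smul f := comp_zero }
  smul_comp _ _ _ z f g := by rw [CatCenter.smul_eq', CatCenter.smul_eq', Category.assoc]
  comp_smul _ _ _ f z g := (Category.assoc ..).symm

variable {k : Type u₄} [Field k] [Linear k C]

instance (X Y : C) : IsScalarTower k (CatCenter C) (X ⟶ Y) where
  smul_assoc _ _ _ := Linear.comp_smul ..

end Linear

namespace RightSerreStructure

open scoped IsMulCommutative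

variable {C : Type u₁} [Category.{v₁} C] [Preadditive C] {k : Type u₄} [Field k] [Linear k C]
  {F : C ⥤ C}

/-- A right Serre structure as an isomorphism of modules over the center, in which `k` enters only
through the coinduced module. -/
noncomputable def toCoinduced (s : RightSerreStructure k C F) (X Y : C) :
    (X ⟶ Y) ≃ₗ[CatCenter C] ((Y ⟶ F.obj X) →ₗ[CatCenter C] Coinduced k (CatCenter C)) where
  toAddEquiv := (s.equiv X Y ≪≫ₗ (Coinduced.homEquiv k (CatCenter C) _).symm).toAddEquiv
  map_smul' z φ := by
    ext u w
    change s.equiv X Y (φ ≫ z.app Y) (w • u) = s.equiv X Y φ ((z • w) • u)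
    rw [s.naturality_right, ← CatCenter.smul_eq', smul_smul, smul_eq_mul]

theorem toCoinduced_apply_apply (s : RightSerreStructure k C F) {X Y : C} (φ : X ⟶ Y)
    (u : Y ⟶ F.obj X) (z : CatCenter C) : s.toCoinduced X Y φ u z = s.equiv X Y φ (z • u) :=
  rfl

theorem toCoinduced_comp_left (s : RightSerreStructure k C F) {X X' Y : C} (f : X' ⟶ X)
    (φ : X ⟶ Y) (u : Y ⟶ F.obj X') :
    s.toCoinduced X' Y (f ≫ φ) u = s.toCoinduced X Y φ (u ≫ F.map f) := by
  ext z
  rw [toCoinduced_apply_apply, toCoinduced_apply_apply, s.naturality_left, Linear.smul_comp]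

theorem toCoinduced_comp_right (s : RightSerreStructure k C F) {X Y Y' : C} (φ : X ⟶ Y)
    (g : Y ⟶ Y') (u : Y' ⟶ F.obj X) :
    s.toCoinduced X Y' (φ ≫ g) u = s.toCoinduced X Y φ (g ≫ u) := by
  ext z
  rw [toCoinduced_apply_apply, toCoinduced_apply_apply, s.naturality_right, Linear.comp_smul]

theorem nonempty_changeOfField (s : RightSerreStructure k C F) (k' : Type u₅) [Field k']
    [Linear k' C] [∀ X Y : C, FiniteDimensional k (X ⟶ Y)]
    [∀ X Y : C, FiniteDimensional k' (X ⟶ Y)] : Nonempty (RightSerreStructure k' C F) := by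
  obtain ⟨l, hl⟩ := Coinduced.exists_isNondegenerate k (CatCenter C) k'
  exact ⟨{
    equiv X Y := (s.toCoinduced X Y).restrictScalars k' ≪≫ₗ
      .ofBijective (Coinduced.compForm l) hl.bijective_compForm
    naturality_left f φ u := congrArg l (s.toCoinduced_comp_left f φ u)
    naturality_right φ g u := congrArg l (s.toCoinduced_comp_right φ g u) }⟩

end RightSerreStructure

section Transport

variable {C : Type u₁} [Category.{v₁} C] [Preadditive C] {D : Type u₂} [Category.{v₂} D]
  [Preadditive D] {L : C ⥤ D} {R : D ⥤ C} [L.Additive] (k : Type u₄) [Field k] [Linear k D]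

/-- The linear structure on `C` transported along a fully faithful additive functor `C ⥤ D`. -/
noncomputable abbrev inducedLinear (hL : L.FullyFaithful) : Linear k C :=
  letI (X Y : C) : SMul k (X ⟶ Y) := ⟨fun c f ↦ hL.preimage (c • L.map f)⟩
  have map_smul {X Y : C} (c : k) (f : X ⟶ Y) : L.map (c • f) = c • L.map f := hL.map_preimage _
  letI (X Y : C) : Module k (X ⟶ Y) :=
    (hL.map_bijective X Y).injective.module k L.mapAddHom map_smul
  { smul_comp _ _ _ c f g := hL.map_injective (by simp [map_smul])
    comp_smul _ _ _ f c g := hL.map_injective (by simp [map_smul]) }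

theorem linear_of_inducedLinear (hL : L.FullyFaithful) :
    letI := inducedLinear k hL
    L.Linear k :=
  letI := inducedLinear k hL
  { map_smul f c := hL.map_preimage (c • L.map f) }

variable [Linear k C] [L.Linear k]

/-- The linear bijection on morphisms given by a fully faithful linear functor. -/
noncomputable def homLinearEquivOfFullyFaithful (hL : L.FullyFaithful) (X Y : C) :
    (X ⟶ Y) ≃ₗ[k] (L.obj X ⟶ L.obj Y) :=
  .ofBijective (L.mapLinearMap k) (hL.map_bijective X Y)

/-- The linear bijection on morphisms given by an adjunction whose left adjoint is linear. -/
noncomputable def homLinearEquivOfAdjunction (adj : L ⊣ R) (X : C) (Y : D) :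
    (X ⟶ R.obj Y) ≃ₗ[k] (L.obj X ⟶ Y) where
  toAddEquiv := (adj.homAddEquiv X Y).symm
  map_smul' c f := by simp [Adjunction.homEquiv_counit]

end Transport

namespace RightSerreStructure

variable {C : Type u₁} [Category.{v₁} C] [Preadditive C] {D : Type u₂} [Category.{v₂} D]
  [Preadditive D] {L : C ⥤ D} {R : D ⥤ C} [L.Additive] {k : Type u₄} [Field k] [Linear k D]
  {F : D ⥤ D}

/-- The right Serre structure on `R ∘ F ∘ L` induced by one on `F`, for a fully faithful linear
functor `L` with right adjoint `R`. -/
noncomputable def ofAdjunction [Linear k C] [L.Linear k] (s : RightSerreStructure k D F)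
    (adj : L ⊣ R) (hL : L.FullyFaithful) : RightSerreStructure k C (L ⋙ F ⋙ R) where
  equiv X Y := homLinearEquivOfFullyFaithful k hL X Y ≪≫ₗ s.equiv (L.obj X) (L.obj Y) ≪≫ₗ
    (homLinearEquivOfAdjunction k adj Y (F.obj (L.obj X))).dualMap
  naturality_left {X X' Y} f φ u := by
    change s.equiv _ _ (L.map (f ≫ φ)) ((adj.homEquiv _ _).symm u) =
      s.equiv _ _ (L.map φ) ((adj.homEquiv _ _).symm (u ≫ R.map (F.map (L.map f))))
    rw [L.map_comp, s.naturality_left, adj.homEquiv_naturality_right_symm]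
  naturality_right φ g u := by
    change s.equiv _ _ (L.map (φ ≫ g)) ((adj.homEquiv _ _).symm u) =
      s.equiv _ _ (L.map φ) ((adj.homEquiv _ _).symm (g ≫ u))
    rw [L.map_comp, s.naturality_right, adj.homEquiv_naturality_left_symm]

theorem nonempty_of_adjunction (s : RightSerreStructure k D F) (adj : L ⊣ R)
    (hL : L.FullyFaithful) (k' : Type u₅) [Field k'] [Linear k' C]
    [∀ X Y : D, FiniteDimensional k (X ⟶ Y)] [∀ X Y : C, FiniteDimensional k' (X ⟶ Y)] :
    Nonempty (RightSerreStructure k' C (L ⋙ F ⋙ R)) := by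
  let _ : Linear k C := inducedLinear k hL
  have : L.Linear k := linear_of_inducedLinear k hL
  have (X Y : C) : FiniteDimensional k (X ⟶ Y) :=
    .equiv (homLinearEquivOfFullyFaithful k hL X Y).symm
  exact (s.ofAdjunction adj hL).nonempty_changeOfField k'

theorem subsingleton_hom_iff (s : RightSerreStructure k D F) (X Y : D) :
    Subsingleton (Y ⟶ F.obj X) ↔ Subsingleton (X ⟶ Y) := by
  rw [(s.equiv X Y).subsingleton_congr, Module.subsingleton_dual_iff k]

end RightSerreStructure

section QuasiInverse

variable {C : Type u₁} [Category.{v₁} C] {D : Type u₂} [Category.{v₂} D]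
  {L R : C ⥤ D} {J : D ⥤ C} {F F' : D ⥤ D}

theorem nonempty_comp_iso_id_of_isIso_unit (adj : L ⊣ J) (adj' : J ⊣ R) [L.Full] [L.Faithful]
    (η : F ⋙ F' ≅ 𝟭 D) [∀ V, IsIso (adj'.unit.app (F.obj (L.obj V)))] :
    Nonempty ((L ⋙ F ⋙ J) ⋙ (R ⋙ F' ⋙ J) ≅ 𝟭 C) :=
  have (V : C) : IsIso ((Functor.whiskerLeft (L ⋙ F) adj'.unit).app V) :=
    inferInstanceAs (IsIso (adj'.unit.app (F.obj (L.obj V))))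
  have := NatIso.isIso_of_isIso_app (Functor.whiskerLeft (L ⋙ F) adj'.unit)
  let unitIso : L ⋙ F ≅ (L ⋙ F) ⋙ J ⋙ R := asIso (Functor.whiskerLeft (L ⋙ F) adj'.unit)
  let cancelIso : L ⋙ (F ⋙ F') ⋙ J ≅ L ⋙ J :=
    Functor.isoWhiskerLeft L (Functor.isoWhiskerRight η J)
  ⟨Functor.isoWhiskerRight unitIso.symm (F' ⋙ J) ≪≫ cancelIso ≪≫ (asIso adj.unit).symm⟩

theorem nonempty_comp_iso_id_of_isIso_counit (adj : L ⊣ J) (adj' : J ⊣ R) [R.Full] [R.Faithful]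
    (ε : F' ⋙ F ≅ 𝟭 D) [∀ V, IsIso (adj.counit.app (F'.obj (R.obj V)))] :
    Nonempty ((R ⋙ F' ⋙ J) ⋙ (L ⋙ F ⋙ J) ≅ 𝟭 C) :=
  have (V : C) : IsIso ((Functor.whiskerLeft (R ⋙ F') adj.counit).app V) :=
    inferInstanceAs (IsIso (adj.counit.app (F'.obj (R.obj V))))
  have := NatIso.isIso_of_isIso_app (Functor.whiskerLeft (R ⋙ F') adj.counit)
  let counitIso : (R ⋙ F') ⋙ J ⋙ L ≅ R ⋙ F' := asIso (Functor.whiskerLeft (R ⋙ F') adj.counit)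
  let cancelIso : R ⋙ (F' ⋙ F) ⋙ J ≅ R ⋙ J :=
    Functor.isoWhiskerLeft R (Functor.isoWhiskerRight ε J)
  ⟨Functor.isoWhiskerRight counitIso (F ⋙ J) ≪≫ cancelIso ≪≫ asIso adj'.counit⟩

end QuasiInverse

namespace Recollement

variable {S : Type u₁} {T : Type u₂} {U : Type u₃}
  [Category.{v₁} S] [Category.{v₂} T] [Category.{v₃} U]
  [HasZeroObject S] [HasZeroObject T] [HasZeroObject U]
  [Preadditive S] [Preadditive T] [Preadditive U]
  [HasShift S ℤ] [HasShift T ℤ] [HasShift U ℤ]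
  [∀ n : ℤ, (shiftFunctor S n).Additive] [∀ n : ℤ, (shiftFunctor T n).Additive]
  [∀ n : ℤ, (shiftFunctor U n).Additive]
  [Pretriangulated S] [Pretriangulated T] [Pretriangulated U] (R : Recollement S T U)

theorem subsingleton_jLo_hom_iSt (V : U) (A : S) :
    Subsingleton (R.jLo.obj V ⟶ R.iSt.obj A) :=
  (R.adj₃.homEquiv V _).subsingleton_congr.2 ⟨(R.zero_comp A).eq_of_tgt⟩

theorem subsingleton_iSt_hom_jSt (A : S) (V : U) :
    Subsingleton (R.iSt.obj A ⟶ R.jSt.obj V) :=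
  (R.adj₄.homEquiv _ V).symm.subsingleton_congr.2 ⟨(R.zero_comp A).eq_of_src⟩

theorem isZero_iSt_obj {A : S} (hA : Subsingleton (A ⟶ A)) : IsZero (R.iSt.obj A) :=
  let _ := R.commShift_iSt
  have := R.isTriangulated_iSt
  R.iSt.map_isZero ((IsZero.iff_id_eq_zero A).2 (hA.elim _ _))

theorem isIso_adj₄_unit_app {X : T} (hX : ∀ A, Subsingleton (R.iSt.obj A ⟶ X)) :
    IsIso (R.adj₄.unit.app X) := by
  obtain ⟨δ, hδ⟩ := R.triangle_a X
  refine (Triangle.isZero₁_iff_isIso₂ _ hδ).1 (R.isZero_iSt_obj ?_)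
  exact (R.adj₂.homEquiv _ X).symm.subsingleton_congr.2 (hX _)

theorem isIso_adj₃_counit_app {X : T} (hX : ∀ A, Subsingleton (X ⟶ R.iSt.obj A)) :
    IsIso (R.adj₃.counit.app X) := by
  obtain ⟨δ, hδ⟩ := R.triangle_b X
  refine (Triangle.isZero₃_iff_isIso₁ _ hδ).1 (R.isZero_iSt_obj ?_)
  exact (R.adj₁.homEquiv X _).subsingleton_congr.2 (hX _)

variable {k : Type u₄} [Field k] [Linear k T] {F F' : T ⥤ T}

theorem isIso_adj₄_unit_app_obj_jLo (s : RightSerreStructure k T F) (V : U) :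
    IsIso (R.adj₄.unit.app (F.obj (R.jLo.obj V))) :=
  R.isIso_adj₄_unit_app fun A ↦ (s.subsingleton_hom_iff _ _).2 (R.subsingleton_jLo_hom_iSt V A)

theorem isIso_adj₃_counit_app_obj_jSt (s : RightSerreStructure k T F) (ε : F' ⋙ F ≅ 𝟭 T) (V : U) :
    IsIso (R.adj₃.counit.app (F'.obj (R.jSt.obj V))) :=
  R.isIso_adj₃_counit_app fun A ↦ (s.subsingleton_hom_iff _ _).1 <|
    (ε.app (R.jSt.obj V)).homToEquiv.subsingleton_congr.2 (R.subsingleton_iSt_hom_jSt A V)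

instance : R.jLo.Additive :=
  let _ := R.commShift_jLo
  have := R.isTriangulated_jLo
  inferInstance

end Recollement

theorem recollement_serre_functor_on_U_general
    {k : Type u₄} [Field k] (k' : Type u₅) [Field k']
    {S : Type u₁} {T : Type u₂} {U : Type u₃}
    [Category.{v₁} S] [Category.{v₂} T] [Category.{v₃} U]
    [HasZeroObject S] [HasZeroObject T] [HasZeroObject U]
    [Preadditive S] [Preadditive T] [Preadditive U]
    [CategoryTheory.Linear k T] [CategoryTheory.Linear k' U]
    [HasShift S ℤ] [HasShift T ℤ] [HasShift U ℤ]
    [∀ n : ℤ, (shiftFunctor S n).Additive] [∀ n : ℤ, (shiftFunctor T n).Additive]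
    [∀ n : ℤ, (shiftFunctor U n).Additive]
    [Pretriangulated S] [Pretriangulated T] [Pretriangulated U]
    [∀ X Y : T, FiniteDimensional k (X ⟶ Y)]
    [∀ X Y : U, FiniteDimensional k' (X ⟶ Y)]
    (R : Recollement S T U)
    {F F' : T ⥤ T} (s : RightSerreStructure k T F)
    (η : F ⋙ F' ≅ 𝟭 T) (ε : F' ⋙ F ≅ 𝟭 T) :
    Nonempty (RightSerreStructure k' U (R.jLo ⋙ F ⋙ R.jUp)) ∧
      (R.jLo ⋙ F ⋙ R.jUp).EssSurj ∧
      Nonempty ((R.jLo ⋙ F ⋙ R.jUp) ⋙ (R.jSt ⋙ F' ⋙ R.jUp) ≅ 𝟭 U) ∧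
      Nonempty ((R.jSt ⋙ F' ⋙ R.jUp) ⋙ (R.jLo ⋙ F ⋙ R.jUp) ≅ 𝟭 U) := by
  have := R.fullyFaithful_jLo.full
  have := R.fullyFaithful_jLo.faithful
  have := R.fullyFaithful_jSt.full
  have := R.fullyFaithful_jSt.faithful
  have := R.isIso_adj₄_unit_app_obj_jLo s
  have := R.isIso_adj₃_counit_app_obj_jSt s ε
  obtain ⟨e⟩ := nonempty_comp_iso_id_of_isIso_unit R.adj₃ R.adj₄ η
  obtain ⟨e'⟩ := nonempty_comp_iso_id_of_isIso_counit R.adj₃ R.adj₄ ε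
  exact ⟨s.nonempty_of_adjunction R.adj₃ R.fullyFaithful_jLo k',
    ⟨fun V ↦ ⟨_, ⟨e'.app V⟩⟩⟩, ⟨e⟩, ⟨e'⟩⟩

/-- Given a recollement `(S, T, U)` and a Serre functor `F` on `T` with quasi-inverse `F'`,
`U` has a Serre functor, namely `j^* ∘ F ∘ j_!`, with quasi-inverse `j^* ∘ F' ∘ j_*`. -/
theorem recollement_serre_functor_on_U
    {k : Type u₄} [Field k]
    {S : Type u₁} {T : Type u₂} {U : Type u₃}
    [Category.{v₁} S] [Category.{v₂} T] [Category.{v₃} U]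
    [HasZeroObject S] [HasZeroObject T] [HasZeroObject U]
    [Preadditive S] [Preadditive T] [Preadditive U]
    [CategoryTheory.Linear k S] [CategoryTheory.Linear k T] [CategoryTheory.Linear k U]
    [HasShift S ℤ] [HasShift T ℤ] [HasShift U ℤ]
    [∀ n : ℤ, (shiftFunctor S n).Additive] [∀ n : ℤ, (shiftFunctor T n).Additive]
    [∀ n : ℤ, (shiftFunctor U n).Additive]
    [Pretriangulated S] [Pretriangulated T] [Pretriangulated U]
    [EssentiallySmall.{v₁} S] [EssentiallySmall.{v₂} T] [EssentiallySmall.{v₃} U]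
    [∀ X Y : S, FiniteDimensional k (X ⟶ Y)]
    [∀ X Y : T, FiniteDimensional k (X ⟶ Y)]
    [∀ X Y : U, FiniteDimensional k (X ⟶ Y)]
    [IsIdempotentComplete T]
    (R : Recollement S T U)
    (SF : SerreFunctor k T) (F' : T ⥤ T)
    (η : SF.F ⋙ F' ≅ 𝟭 T) (ε : F' ⋙ SF.F ≅ 𝟭 T) :
    Nonempty (RightSerreStructure k U (R.jLo ⋙ SF.F ⋙ R.jUp)) ∧
      (R.jLo ⋙ SF.F ⋙ R.jUp).EssSurj ∧
      Nonempty ((R.jLo ⋙ SF.F ⋙ R.jUp) ⋙ (R.jSt ⋙ F' ⋙ R.jUp) ≅ 𝟭 U) ∧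
      Nonempty ((R.jSt ⋙ F' ⋙ R.jUp) ⋙ (R.jLo ⋙ SF.F ⋙ R.jUp) ≅ 𝟭 U) :=
  recollement_serre_functor_on_U_general k R SF.rightSerre η ε
end
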